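/- Let β_H, β_R, β_U be positive reals with β_H + β_R + β_U = 1, let γ ∈ [0,1], and for x ∈ [0,1] define E(x) = (β_R/(β_R+β_H))·(1−p) + ((1−x)β_R/(β_H+(1−x)β_R))·(1−p)·γ + (xβ_R/(xβ_R+β_U))·p with p = β_U + x·β_R. Then for every x ∈ [0,1], E(x) ≤ max(E(0), E(1)); that is, rational miners maximize their expected return by moving either all of their mining power to the fork or none of it. -/

import Mathlib

/-! Since `1 - p = βH + (1 - x)·βR`, the denominators in the return are exactly the
winning probabilities they are multiplied by, so the return is an affine function of `x` on
`[0,1]`. Its value at `x` is thus the convex combination of its values at `0` and `1` with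
weights `1 - x` and `x`, which is at most the larger of the two. -/

/-- The rational miners' total expected fee return under safe depth `D = 1` at the tied
state `(1,1)`, when they shift fraction `x` of their power `βR` to the fork: the fork
wins with probability `p = βU + x·βR`. -/
noncomputable def ratReturn (βH βR βU γ x : ℝ) : ℝ :=
  (βR / (βR + βH)) * (1 - (βU + x * βR))
    + ((1 - x) * βR / (βH + (1 - x) * βR)) * (1 - (βU + x * βR)) * γ
    + (x * βR / (x * βR + βU)) * (βU + x * βR)

/-- On `[0,1]` the denominators are positive and cancel against the winning probabilities,
leaving an affine function of `x`. -/
theorem ratReturn_eq_affine {βH βR βU γ x : ℝ} (hH : 0 < βH) (hR : 0 < βR)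
    (hU : 0 < βU) (hsum : βH + βR + βU = 1) (hx0 : 0 ≤ x) (hx1 : x ≤ 1) :
    ratReturn βH βR βU γ x =
      (βR / (βR + βH)) * (1 - (βU + x * βR)) + (1 - x) * βR * γ + x * βR := by
  have hmain : 0 < βH + (1 - x) * βR :=
    add_pos_of_pos_of_nonneg hH (mul_nonneg (sub_nonneg.mpr hx1) hR.le)
  have hfork : 0 < x * βR + βU := add_pos_of_nonneg_of_pos (mul_nonneg hx0 hR.le) hU
  have hp : 1 - (βU + x * βR) = βH + (1 - x) * βR := by linear_combination -hsum
  rw [ratReturn, hp, add_comm βU, div_mul_cancel₀ _ hmain.ne', div_mul_cancel₀ _ hfork.ne']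

/-- For positive mining powers `βH + βR + βU = 1` and `γ ∈ [0,1]`, the rational miners'
expected return at any `x ∈ [0,1]` is at most the larger of its values at `x = 0` and
`x = 1`: rational miners maximize by moving all of their mining power or none. -/
theorem ratReturn_le_max_endpoints (βH βR βU γ : ℝ) (hH : 0 < βH) (hR : 0 < βR)
    (hU : 0 < βU) (hsum : βH + βR + βU = 1) (hγ0 : 0 ≤ γ) (hγ1 : γ ≤ 1) :
    ∀ x : ℝ, 0 ≤ x → x ≤ 1 →
      ratReturn βH βR βU γ x ≤ max (ratReturn βH βR βU γ 0) (ratReturn βH βR βU γ 1) := by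
  intro x hx0 hx1
  have hconv : ratReturn βH βR βU γ x =
      (1 - x) * ratReturn βH βR βU γ 0 + x * ratReturn βH βR βU γ 1 := by
    rw [ratReturn_eq_affine hH hR hU hsum hx0 hx1,
      ratReturn_eq_affine hH hR hU hsum le_rfl zero_le_one,
      ratReturn_eq_affine hH hR hU hsum zero_le_one le_rfl]
    ring
  rw [hconv]
  exact Convex.combo_le_max _ _ (sub_nonneg.mpr hx1) hx0 (sub_add_cancel 1 x)
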